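/- arXiv:2109.09245 — 2 statements merged into one kernel-verified Lean document; each statement's English description precedes it below -/
import Mathlib

section
/- Let n ≥ 1, let σ be the permutation of ZMod (2n) given by σ(x) = x + 1, and let τ be a fixed-point-free involution of ZMod (2n) (τ ∘ τ = id and τ(x) ≠ x for all x). For x ≠ z in ZMod (2n) let d(x,z) ∈ {1, …, 2n−1} be the unique k with z = x + k. Say that the chords of x and of y interlace if the sets {x, τ(x)} and {y, τ(y)} are disjoint and exactly one of the two inequalities d(x,y) < d(x,τ(x)) and d(x,τ(y)) < d(x,τ(x)) holds. Let N be the (2n) × (2n) matrix over ZMod 2 with N(x,y) = 1 if the chords of x and of y interlace and N(x,y) = 0 otherwise. Then the number of orbits of the permutation τ ∘ σ acting on ZMod (2n) (the number of cycles, counting fixed points as orbits) equals n − rank(N) + 1. -/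
attribute [local instance] Classical.propDecidable

namespace CNF

lemma finrank_map_add {V : Type*} [AddCommGroup V] [Module (ZMod 2) V] [FiniteDimensional (ZMod 2) V]
    (φ : V →ₗ[ZMod 2] V) (A : Submodule (ZMod 2) V) :
    Module.finrank (ZMod 2) (A.map φ) + Module.finrank (ZMod 2) (A ⊓ LinearMap.ker φ : Submodule (ZMod 2) V)
      = Module.finrank (ZMod 2) A := by
  have h := LinearMap.finrank_range_add_finrank_ker (φ.domRestrict A)
  rw [← h, LinearMap.range_domRestrict, LinearMap.ker_domRestrict]
  congr 1
  have e := (Submodule.equivSubtypeMap A (Submodule.comap A.subtype (LinearMap.ker φ))).finrank_eq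
  rw [Submodule.map_comap_subtype] at e
  exact e.symm

lemma z2 (a : ZMod 2) : a + a = 0 := CharTwo.add_self_eq_zero a

variable {n : ℕ} [NeZero n] (τ : Equiv.Perm (ZMod (2 * n)))

/-- invariant labels of arcs -/
def F : Submodule (ZMod 2) (ZMod (2 * n) → ZMod 2) where
  carrier := {f | ∀ x, f (τ (x + 1)) = f x}
  add_mem' := by intro a b ha hb x; simp [ha x, hb x]
  zero_mem' := by intro x; rfl
  smul_mem' := by intro c a ha x; simp [ha x]

/-- chord functions -/
def T : Submodule (ZMod 2) (ZMod (2 * n) → ZMod 2) where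
  carrier := {f | ∀ x, f (τ x) = f x}
  add_mem' := by intro a b ha hb x; simp [ha x, hb x]
  zero_mem' := by intro x; rfl
  smul_mem' := by intro c a ha x; simp [ha x]

/-- difference operator -/
def D : (ZMod (2 * n) → ZMod 2) →ₗ[ZMod 2] (ZMod (2 * n) → ZMod 2) where
  toFun f := fun x => f x + f (x - 1)
  map_add' := by intro a b; ext x; simp; ring
  map_smul' := by intro a b; ext x; simp; ring

/-- chord symmetrization -/
def P : (ZMod (2 * n) → ZMod 2) →ₗ[ZMod 2] (ZMod (2 * n) → ZMod 2) where
  toFun f := fun x => f x + f (τ x)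
  map_add' := by intro a b; ext x; simp; ring
  map_smul' := by intro a b; ext x; simp; ring

/-- sum over the open interval from `x` to `τ x` -/
def M : (ZMod (2 * n) → ZMod 2) →ₗ[ZMod 2] (ZMod (2 * n) → ZMod 2) where
  toFun g := fun x => ∑ y, (if y ≠ x ∧ (y - x).val < (τ x - x).val then 1 else 0) * g y
  map_add' := by intro a b; ext x; simp [mul_add, Finset.sum_add_distrib]
  map_smul' := by intro a b; ext x; simp [Finset.mul_sum]

lemma card_orbits :
    Nat.card (MulAction.orbitRel.Quotient
        (Subgroup.zpowers (τ * Equiv.addRight (1 : ZMod (2 * n)))) (ZMod (2 * n)))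
      = Module.finrank (ZMod 2) (F τ) := by
  set p := τ * Equiv.addRight (1 : ZMod (2 * n)) with hp
  have hpx : ∀ x, p x = τ (x + 1) := fun x => rfl
  set Q := MulAction.orbitRel.Quotient (Subgroup.zpowers p) (ZMod (2 * n)) with hQ
  have : Finite Q := Quotient.finite _
  have := Fintype.ofFinite Q
  let L : (Q → ZMod 2) →ₗ[ZMod 2] (ZMod (2 * n) → ZMod 2) :=
    LinearMap.funLeft (ZMod 2) (ZMod 2) (fun x => (Quotient.mk _ x : Q))
  have hinj : Function.Injective L :=
    LinearMap.funLeft_injective_of_surjective _ _ _ (fun q => Quotient.exists_rep q)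
  have hr : LinearMap.range L = F τ := by
    ext f
    constructor
    · rintro ⟨h, rfl⟩ x
      change h (Quotient.mk _ (p x)) = h (Quotient.mk _ x)
      congr 1
      apply Quotient.sound
      exact ⟨⟨p, Subgroup.mem_zpowers p⟩, rfl⟩
    · intro hf
      have hf1 : ∀ x, f (p x) = f x := hf
      have hz : ∀ g ∈ Subgroup.zpowers p, ∀ x, f (g x) = f x := by
        intro g hg
        obtain ⟨k, rfl⟩ := Subgroup.mem_zpowers_iff.1 hg
        induction k using Int.induction_on with
        | zero => intro x; simp
        | succ i ih =>
          intro x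
          rw [zpow_add_one, Equiv.Perm.mul_apply, ih (Subgroup.zpow_mem_zpowers _ _), hf1]
        | pred i ih =>
          intro x
          rw [zpow_sub_one, Equiv.Perm.mul_apply, ih (Subgroup.zpow_mem_zpowers _ _), ← hf1]
          simp
      refine ⟨fun q => Quotient.lift f ?_ q, ?_⟩
      · rintro a b ⟨⟨g, hg⟩, hgb⟩
        rw [← hgb]
        exact hz g hg b
      · ext x; rfl
  rw [← hr, LinearMap.finrank_range_of_inj hinj, Module.finrank_fintype_fun_eq_card,
    Nat.card_eq_fintype_card]


lemma map_P (hinv : ∀ x, τ (τ x) = x) (hfp : ∀ x, τ x ≠ x) (g) (hg : g ∈ T τ) : ∃ h, P τ h = g := by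
  refine ⟨fun x => if x.val < (τ x).val then g x else 0, ?_⟩
  ext x
  change (if x.val < (τ x).val then g x else 0) +
    (if (τ x).val < (τ (τ x)).val then g (τ x) else 0) = g x
  rw [hinv, hg x]
  have : x.val ≠ (τ x).val := fun h => hfp x (ZMod.val_injective _ h).symm
  rcases lt_or_gt_of_ne this with h | h
  · simp [h, h.le]
  · simp [h, h.le]

lemma P_mem (hinv : ∀ x, τ (τ x) = x) (hfp : ∀ x, τ x ≠ x) (h) : P τ h ∈ T τ := by
  intro x
  change h _ + h _ = h _ + h _
  rw [hinv, add_comm]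

lemma range_P (hinv : ∀ x, τ (τ x) = x) (hfp : ∀ x, τ x ≠ x) : LinearMap.range (P τ) = T τ := by
  ext g
  constructor
  · rintro ⟨h, rfl⟩; exact P_mem τ hinv hfp h
  · intro hg; exact map_P τ hinv hfp g hg

lemma ker_P (hinv : ∀ x, τ (τ x) = x) (hfp : ∀ x, τ x ≠ x) : LinearMap.ker (P τ) = T τ := by
  ext g
  rw [LinearMap.mem_ker]
  constructor
  · intro h x
    have : g x + g (τ x) = 0 := congrFun h x
    exact (CharTwo.add_eq_zero.mp this).symm
  · intro h
    ext x
    change g x + g (τ x) = 0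
    rw [h x, z2]

lemma finrank_T (hinv : ∀ x, τ (τ x) = x) (hfp : ∀ x, τ x ≠ x) : Module.finrank (ZMod 2) (T τ) = n := by
  have h := LinearMap.finrank_range_add_finrank_ker (P τ)
  rw [range_P τ hinv hfp, ker_P τ hinv hfp, Module.finrank_fintype_fun_eq_card, ZMod.card] at h
  omega

lemma total_zero (hinv : ∀ x, τ (τ x) = x) (hfp : ∀ x, τ x ≠ x) (g) (hg : g ∈ T τ) : ∑ x, g x = 0 := by
  refine Finset.sum_involution (fun x _ => τ x) ?_ ?_ ?_ ?_
  · intro x _; rw [hg x, z2]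
  · intro x _ _; exact hfp x
  · simp
  · intro x _; exact hinv x


lemma sum_range_eq (g : ZMod (2 * n) → ZMod 2) (x : ZMod (2 * n)) (m : ℕ) (hm : m < 2 * n) :
    ∑ k ∈ Finset.range m, g (x + (k + 1 : ℕ)) =
      ∑ y, (if y ≠ x ∧ (y - x).val ≤ m then 1 else 0) * g y := by
  simp only [ite_mul, one_mul, zero_mul]
  rw [← Finset.sum_filter]
  refine Finset.sum_bij' (fun k _ => x + (k + 1 : ℕ)) (fun y _ => (y - x).val - 1) ?_ ?_ ?_ ?_ ?_
  · intro k hk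
    rw [Finset.mem_range] at hk
    have h1 : ((k + 1 : ℕ) : ZMod (2 * n)).val = k + 1 := ZMod.val_natCast_of_lt (by omega)
    rw [Finset.mem_filter]
    refine ⟨Finset.mem_univ _, ?_, ?_⟩
    · intro h
      rw [add_eq_left] at h
      rw [h, ZMod.val_zero] at h1
      omega
    · rw [add_sub_cancel_left, h1]; omega
  · intro y hy
    rw [Finset.mem_filter] at hy
    have : (y - x).val ≠ 0 := by
      rw [Ne, ZMod.val_eq_zero, sub_eq_zero]; exact hy.2.1
    rw [Finset.mem_range]
    omega
  · intro k hk
    rw [Finset.mem_range] at hk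
    rw [add_sub_cancel_left, ZMod.val_natCast_of_lt (by omega)]; simp
  · intro y hy
    rw [Finset.mem_filter] at hy
    have : (y - x).val ≠ 0 := by
      rw [Ne, ZMod.val_eq_zero, sub_eq_zero]; exact hy.2.1
    rw [Nat.sub_add_cancel (by omega), ZMod.natCast_zmod_val]; ring
  · intro k hk; rfl

lemma telescope (f : ZMod (2 * n) → ZMod 2) (x : ZMod (2 * n)) (m : ℕ) :
    ∑ k ∈ Finset.range m, D f (x + (k + 1 : ℕ)) = f (x + m) + f x := by
  induction m with
  | zero => simp [z2]
  | succ m ih =>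
    rw [Finset.sum_range_succ, ih]
    change _ + (f _ + f (x + (m + 1 : ℕ) - 1)) = _
    have : x + ((m + 1 : ℕ) : ZMod (2 * n)) - 1 = x + m := by push_cast; ring
    rw [this]
    linear_combination z2 (f (x + m))


lemma M_D (hinv : ∀ x, τ (τ x) = x) (hfp : ∀ x, τ x ≠ x) (f : ZMod (2 * n) → ZMod 2) (x : ZMod (2 * n)) :
    M τ (D f) x + D f (τ x) = f (τ x) + f x := by
  have h1 := telescope f x (τ x - x).val
  rw [ZMod.natCast_zmod_val, add_sub_cancel] at h1
  rw [← h1, sum_range_eq _ _ _ (ZMod.val_lt _)]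
  change (∑ y, (if y ≠ x ∧ (y - x).val < (τ x - x).val then 1 else 0) * D f y) + _ = _
  have h2 : D f (τ x) = ∑ y, (if y = τ x then 1 else 0) * D f y := by simp
  rw [h2, ← Finset.sum_add_distrib]
  refine Finset.sum_congr rfl fun y _ => ?_
  rw [← add_mul]
  congr 1
  by_cases hy : y = τ x
  · subst hy; simp [hfp x]
  · have : (y - x).val ≠ (τ x - x).val := fun h => hy (by
      have := ZMod.val_injective _ h
      exact sub_left_injective this)
    by_cases hyx : y = x
    · simp [hyx, (hfp x).symm]
    · simp [hy, hyx, le_iff_lt_or_eq, this]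

lemma D_surj (hinv : ∀ x, τ (τ x) = x) (hfp : ∀ x, τ x ≠ x) (g : ZMod (2 * n) → ZMod 2) (hg : g ∈ T τ) : ∃ f, D f = g := by
  have hn : 0 < n := Nat.pos_of_ne_zero (NeZero.ne n)
  have : Fact (1 < 2 * n) := ⟨by omega⟩
  refine ⟨fun x => ∑ k ∈ Finset.range x.val, g (0 + (k + 1 : ℕ)), ?_⟩
  ext x
  change (∑ k ∈ Finset.range x.val, g (0 + (k + 1 : ℕ))) +
    (∑ k ∈ Finset.range (x - 1).val, g (0 + (k + 1 : ℕ))) = g x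
  rw [sum_range_eq _ _ _ (ZMod.val_lt _), sum_range_eq _ _ _ (ZMod.val_lt _)]
  by_cases hx : x = 0
  · subst hx
    have h0 := total_zero τ hinv hfp g hg
    have h2 : g 0 = ∑ y, (if y = 0 then 1 else 0) * g y := by simp
    rw [← CharTwo.add_eq_zero, h2]
    refine Eq.trans ?_ h0
    rw [← Finset.sum_add_distrib, ← Finset.sum_add_distrib]
    refine Finset.sum_congr rfl fun y _ => ?_
    rw [← add_mul, ← add_mul]
    have h3 : y.val ≤ (0 - 1 : ZMod (2 * n)).val := by
      have := ZMod.val_lt y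
      have h4 : (0 - 1 : ZMod (2 * n)) = ((2 * n - 1 : ℕ) : ZMod (2 * n)) := by
        rw [Nat.cast_sub (by omega), ZMod.natCast_self]; simp
      rw [h4, ZMod.val_natCast_of_lt (by omega)]
      omega
    by_cases hy : y = 0
    · simp [hy]
    · simp only [sub_zero, h3]
      simp [hy]
  · have h2 : g x = ∑ y, (if y = x then 1 else 0) * g y := by simp
    rw [h2, ← Finset.sum_add_distrib]
    refine Finset.sum_congr rfl fun y _ => ?_
    rw [← add_mul]
    congr 1
    have hx0 : x.val ≠ 0 := by rwa [Ne, ZMod.val_eq_zero]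
    have h1 : (x - 1).val = x.val - 1 := by
      rw [ZMod.val_sub (by rw [ZMod.val_one]; omega), ZMod.val_one]
    have hyx : y = x ↔ y.val = x.val := ⟨fun h => by rw [h], fun h => ZMod.val_injective _ h⟩
    rw [h1, sub_zero]
    by_cases hy : y = 0
    · subst hy
      simp [Ne.symm hx]
    · simp only [hyx, hy, ne_eq, not_false_eq_true, true_and]
      rcases lt_trichotomy y.val x.val with h | h | h
      · simp [h.le, h.ne, show y.val ≤ x.val - 1 by omega, z2]
      · simp [h, show ¬ (x.val ≤ x.val - 1) by omega]
      · simp [h.not_ge, h.ne', show ¬ (y.val ≤ x.val - 1) by omega]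

lemma mem_F_iff (hinv : ∀ x, τ (τ x) = x) (hfp : ∀ x, τ x ≠ x) (f) : f ∈ F τ ↔ ∀ y, f (τ y) = f (y - 1) := by
  constructor
  · intro h y; have := h (y - 1); rwa [sub_add_cancel] at this
  · intro h x; rw [h, add_sub_cancel_right]

lemma map_D (hinv : ∀ x, τ (τ x) = x) (hfp : ∀ x, τ x ≠ x) : (F τ).map D = T τ ⊓ LinearMap.ker (M τ) := by
  ext g
  constructor
  · rintro ⟨f, hf, rfl⟩
    have hf := (mem_F_iff τ hinv hfp f).1 hf
    have hD : ∀ y, D f y = f y + f (τ y) := fun y => by rw [hf]; rfl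
    refine ⟨fun x => by rw [hD, hD, hinv, add_comm], ?_⟩
    change M τ (D f) = 0
    ext x
    have := M_D τ hinv hfp f x
    rw [hD, hinv] at this
    simpa using this
  · rintro ⟨hT, hM⟩
    obtain ⟨f, rfl⟩ := D_surj τ hinv hfp g hT
    refine ⟨f, ?_, rfl⟩
    refine (mem_F_iff τ hinv hfp f).2 fun y => ?_
    have h1 := M_D τ hinv hfp f y
    have hM : M τ (D f) = 0 := hM
    rw [hM, hT y] at h1
    have h2 : f y + f (y - 1) = f (τ y) + f y := by
      rw [← h1]; exact (zero_add _).symm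
    rw [add_comm] at h2
    exact (add_right_cancel h2).symm

lemma ker_D (hinv : ∀ x, τ (τ x) = x) (hfp : ∀ x, τ x ≠ x) : Module.finrank (ZMod 2) (F τ ⊓ LinearMap.ker D : Submodule (ZMod 2) (ZMod (2 * n) → ZMod 2)) = 1 := by
  have : F τ ⊓ LinearMap.ker D = Submodule.span (ZMod 2) {fun _ => 1} := by
    ext f
    rw [Submodule.mem_span_singleton]
    constructor
    · rintro ⟨_, hf⟩
      have hf : D f = 0 := hf
      refine ⟨f 0, ?_⟩
      ext x
      have := telescope f 0 x.val
      rw [hf] at this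
      simp only [Pi.zero_apply, Finset.sum_const_zero, ZMod.natCast_zmod_val, zero_add] at this
      simpa using (CharTwo.add_eq_zero.mp this.symm).symm
    · rintro ⟨c, rfl⟩
      refine ⟨fun x => rfl, ?_⟩
      change D _ = 0
      ext x
      exact z2 _
  rw [this, finrank_span_singleton]
  intro h
  exact one_ne_zero (congrFun h 0)

lemma M_P (hinv : ∀ x, τ (τ x) = x) (hfp : ∀ x, τ x ≠ x) (h : ZMod (2 * n) → ZMod 2) (N : Matrix (ZMod (2 * n)) (ZMod (2 * n)) (ZMod 2))
    (hN : N = fun x y => if 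
      (Disjoint ({x, τ x} : Set (ZMod (2 * n))) ({y, τ y} : Set (ZMod (2 * n))) ∧
          Xor' ((y - x).val < (τ x - x).val) ((τ y - x).val < (τ x - x).val)) then 1 else 0) :
    N.mulVecLin h = M τ (P τ h) := by
  ext x
  change ∑ y, N x y * h y =
    ∑ y, (if y ≠ x ∧ (y - x).val < (τ x - x).val then 1 else 0) * (h y + h (τ y))
  simp only [mul_add, Finset.sum_add_distrib]
  have h1 : ∑ y, (if y ≠ x ∧ (y - x).val < (τ x - x).val then 1 else 0) * h (τ y)
    = ∑ y, (if τ y ≠ x ∧ (τ y - x).val < (τ x - x).val then 1 else 0) * h y := by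
    rw [← Equiv.sum_comp τ]
    simp only [hinv]
  rw [h1, ← Finset.sum_add_distrib]
  refine Finset.sum_congr rfl fun y _ => ?_
  rw [← add_mul]
  congr 1
  subst hN
  have hdn : ∀ a b : ZMod (2 * n), ¬ Disjoint ({a, b} : Set (ZMod (2 * n))) {a, b} := by
    intro a b h
    exact Set.disjoint_left.1 h (Set.mem_insert a _) (Set.mem_insert a _)
  by_cases hd : y = x
  · subst hd; simp only [hdn]; simp
  by_cases hd' : τ y = x
  · have : τ x = y := by rw [← hd', hinv]
    subst hd'; simp [hinv]
  have hyt : y ≠ τ x := fun e => hd' (by rw [e, hinv])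
  have htt : τ y ≠ τ x := fun e => hd (τ.injective e)
  have hdis : Disjoint ({x, τ x} : Set (ZMod (2 * n))) ({y, τ y} : Set (ZMod (2 * n))) := by
    simp [hd, hd', Ne.symm hyt, Ne.symm htt, Ne.symm hd, Ne.symm hd', Ne.symm]
  simp only [hdis, hd, hd', ne_eq, not_false_eq_true, true_and]
  by_cases a : (y - x).val < (τ x - x).val <;> by_cases b : (τ y - x).val < (τ x - x).val <;>
    simp [a, b, Xor', z2]

end CNF




/-- The circuit-nullity formula.  A chord diagram with `n` chords on a circle with `2n`
marked points `ZMod (2n)` is encoded by a fixed-point-free involution `τ`; surgery along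
all chords produces circles corresponding to the cycles of `τ ∘ σ`, where `σ (x) = x + 1`.
The number of such cycles equals `n - rank N + 1`, where `N` is the `ZMod 2`-valued
interlacement matrix of the chord diagram. -/
theorem circuit_nullity_formula (n : ℕ) [NeZero n] (hn : 1 ≤ n)
    (τ : Equiv.Perm (ZMod (2 * n)))
    (hinv : ∀ x, τ (τ x) = x) (hfp : ∀ x, τ x ≠ x) :
    ∀ d : ZMod (2 * n) → ZMod (2 * n) → ℕ, (d = fun x z => (z - x).val) →
    ∀ interlace : ZMod (2 * n) → ZMod (2 * n) → Prop,
      (interlace = fun x y =>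
        Disjoint ({x, τ x} : Set (ZMod (2 * n))) ({y, τ y} : Set (ZMod (2 * n))) ∧
          Xor' (d x y < d x (τ x)) (d x (τ y) < d x (τ x))) →
    ∀ N : Matrix (ZMod (2 * n)) (ZMod (2 * n)) (ZMod 2),
      (N = fun x y => if interlace x y then 1 else 0) →
    Nat.card (MulAction.orbitRel.Quotient
        (Subgroup.zpowers (τ * Equiv.addRight (1 : ZMod (2 * n)))) (ZMod (2 * n)))
      = n - N.rank + 1 := by
  intro d hd interlace hI N hN
  subst hd
  subst hI
  have hMP := fun h => CNF.M_P τ hinv hfp h N (by rw [hN]; funext x y; congr)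
  rw [CNF.card_orbits]
  have e1 := CNF.finrank_map_add CNF.D (CNF.F τ)
  rw [CNF.ker_D τ hinv hfp, CNF.map_D τ hinv hfp] at e1
  have e2 := CNF.finrank_map_add (CNF.P τ) (LinearMap.ker N.mulVecLin)
  have k1 : LinearMap.ker N.mulVecLin ⊓ LinearMap.ker (CNF.P τ) = CNF.T τ := by
    rw [CNF.ker_P τ hinv hfp, inf_eq_right, ← CNF.ker_P τ hinv hfp]
    intro h hh
    rw [LinearMap.mem_ker] at hh ⊢
    rw [hMP, hh, map_zero]
  have k2 : (LinearMap.ker N.mulVecLin).map (CNF.P τ) = CNF.T τ ⊓ LinearMap.ker (CNF.M τ) := by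
    ext g
    constructor
    · rintro ⟨h, hh, rfl⟩
      refine ⟨CNF.P_mem τ hinv hfp h, ?_⟩
      have hh : N.mulVecLin h = 0 := hh
      rw [hMP] at hh
      exact hh
    · rintro ⟨hT, hM⟩
      obtain ⟨h, rfl⟩ := CNF.map_P τ hinv hfp g hT
      refine ⟨h, ?_, rfl⟩
      change N.mulVecLin h = 0
      rw [hMP]; exact hM
  rw [k1, k2, CNF.finrank_T τ hinv hfp] at e2
  have e3 := LinearMap.finrank_range_add_finrank_ker N.mulVecLin
  rw [Module.finrank_fintype_fun_eq_card, ZMod.card] at e3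
  have e4 : N.rank = Module.finrank (ZMod 2) (LinearMap.range N.mulVecLin) := rfl
  omega
end

section
/- Let n : ℕ and let u, w : Fin n → ℕ take values in {0,1}, with w k ≤ u k for all k, and suppose ∑_k u k = (∑_k w k) + 2, so that u and w differ in exactly two positions i < j. Let v₁ be w updated to have value 1 at position i, and v₂ be w updated to have value 1 at position j (these are exactly the labelings v with w ≤ v ≤ u and ∑ v = ∑ w + 1). Define, for a pair (x, y) of such 0–1 vectors differing in a single position m, the sign exponent s₀(x,y) = ∑_{k < m} x k. Then s₀(u,v₁) + s₀(v₁,w) + s₀(u,v₂) + s₀(v₂,w) is odd; equivalently, (−1)^{s₀(u,v₁)+s₀(v₁,w)} = −(−1)^{s₀(u,v₂)+s₀(v₂,w)}. -/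
/-- Sign cancellation in the Khovanov differential.  Let `u, w` be `0–1` vectors with
`w ≤ u` and `∑ u = ∑ w + 2`, differing exactly at the two positions `i < j`.  Let
`v₁ = w` updated with `1` at `i` and `v₂ = w` updated with `1` at `j` (the two intermediate
vertices of the square from `w` to `u` in the resolution cube).  With
`s₀(x, y) = ∑_{k < m} x k` for vectors differing at the single position `m`, the total sign
exponent `s₀(u,v₁) + s₀(v₁,w) + s₀(u,v₂) + s₀(v₂,w)` is odd; equivalently the two
length-two paths contribute opposite signs, so the Khovanov differential squares to zero. -/
theorem khovanov_square_sign_cancellation (n : ℕ) (u w : Fin n → ℕ)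
    (hu01 : ∀ k, u k = 0 ∨ u k = 1) (hw01 : ∀ k, w k = 0 ∨ w k = 1)
    (hle : ∀ k, w k ≤ u k) (hsum : ∑ k, u k = (∑ k, w k) + 2)
    (i j : Fin n) (hij : i < j)
    (hwi : w i = 0) (hui : u i = 1) (hwj : w j = 0) (huj : u j = 1)
    (hagree : ∀ k, k ≠ i → k ≠ j → u k = w k) :
    Odd ((∑ k ∈ Finset.Iio j, u k)
        + (∑ k ∈ Finset.Iio i, Function.update w i 1 k)
        + (∑ k ∈ Finset.Iio i, u k)
        + (∑ k ∈ Finset.Iio j, Function.update w j 1 k)) ∧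
    ((-1 : ℤ) ^ ((∑ k ∈ Finset.Iio j, u k) + (∑ k ∈ Finset.Iio i, Function.update w i 1 k))
      = -(-1 : ℤ) ^ ((∑ k ∈ Finset.Iio i, u k)
          + (∑ k ∈ Finset.Iio j, Function.update w j 1 k))) := by
  have h1 : ∑ k ∈ Finset.Iio i, Function.update w i 1 k = ∑ k ∈ Finset.Iio i, w k :=
    Finset.sum_congr rfl fun k hk => Function.update_of_ne (Finset.mem_Iio.1 hk).ne _ _
  have h2 : ∑ k ∈ Finset.Iio j, Function.update w j 1 k = ∑ k ∈ Finset.Iio j, w k :=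
    Finset.sum_congr rfl fun k hk => Function.update_of_ne (Finset.mem_Iio.1 hk).ne _ _
  have h3 : ∑ k ∈ Finset.Iio i, u k = ∑ k ∈ Finset.Iio i, w k :=
    Finset.sum_congr rfl fun k hk =>
      hagree k (Finset.mem_Iio.1 hk).ne ((Finset.mem_Iio.1 hk).trans hij).ne
  have h4 : ∑ k ∈ Finset.Iio j, u k = ∑ k ∈ Finset.Iio j, w k + 1 := by
    have hi : i ∈ Finset.Iio j := Finset.mem_Iio.2 hij
    rw [← Finset.add_sum_erase _ u hi, ← Finset.add_sum_erase _ w hi, hui, hwi]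
    have : ∑ k ∈ (Finset.Iio j).erase i, u k = ∑ k ∈ (Finset.Iio j).erase i, w k :=
      Finset.sum_congr rfl fun k hk =>
        hagree k (Finset.ne_of_mem_erase hk) (Finset.mem_Iio.1 (Finset.mem_of_mem_erase hk)).ne
    omega
  rw [h1, h2, h3, h4]
  refine ⟨⟨∑ k ∈ Finset.Iio j, w k + ∑ k ∈ Finset.Iio i, w k, by ring⟩, by ring⟩
end
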